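/- arXiv:1806.01449 — 2 statements merged into one kernel-verified Lean document; each statement's English description precedes it below -/
import Mathlib

section
/- Let Λ be a cyclic Nakayama algebra with associated modules Δ = {Δ_1,…,Δ_r}, and let X be an indecomposable Λ-module. Then for every i ≥ 2, the module Ω^i(X) admits a filtration whose subquotients lie in Δ, i.e. Ω^i(X) is a Δ-module. -/
/-!
A finitely generated uniserial module over a cyclic Nakayama algebra is determined by its
top `S a` and its length `l`; its composition factors are `S a, …, S (a + l - 1)`
(`IsInterval`, `IsInterval.sub`, `IsInterval.equiv`). Since `P a` has length `c a`,
`Ω` sends `(a, l)` to `(a + l, c a - l)` (`IsInterval.syzygy`), so a nonzero `Ω²` has top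
`a + c a`, the successor of the socle of `P a`, and has the socle of `P (a + l)`. Socles of
indecomposable projectives are of the form `S (kEven j)`, so a nonzero higher syzygy is an
interval with top of the form `kEven j₁ + 1` and socle of the form `kEven j₂`
(`nth_syzygy`).

Such an interval is cut after each composition factor `S (kEven j)`
(`IsInterval.exists_filtration`). Every piece runs from `kEven i + 1` to the next relation
end on the cycle, and this next end is `kEven (i + 1)` (`kEven_next`): on the universal
cover, `n ↦ n + c n` is monotone by the Kupisch inequality and jumps exactly after the
starts of the relations, which are cyclically ordered. A piece has length at most `N`, so it
is the shortest interval with its top and socle, that is, `Δ (i + 1)`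
(`IsInterval.equiv_delta`).
-/

/-!
Common definitions: Igusa–Todorov φ-function, syzygies, and cyclic Nakayama
algebras presented by monomial relations, following E. Sen,
"The φ-dimension of cyclic Nakayama algebras".
-/

noncomputable section

namespace PhiDim

variable (Λ : Type) [Ring Λ]

/-- A module is *uniserial* if its submodules are totally ordered by inclusion. -/
def IsUniserial (M : ModuleCat.{0} Λ) : Prop :=
  ∀ N₁ N₂ : Submodule Λ M, N₁ ≤ N₂ ∨ N₂ ≤ N₁

/-- A module is *indecomposable* if it is nonzero and admits no nontrivial
direct sum decomposition. -/
def Indec (M : ModuleCat.{0} Λ) : Prop :=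
  Nontrivial M ∧ ∀ N N' : Submodule Λ M, IsCompl N N' → N = ⊥ ∨ N' = ⊥

/-- `X` is (isomorphic to) a direct summand of `M`. -/
def IsSummand (X M : ModuleCat.{0} Λ) : Prop :=
  ∃ N N' : Submodule Λ M, IsCompl N N' ∧ Nonempty (X ≃ₗ[Λ] N)

/-- `f : P → M` is a projective cover: `P` is projective, `f` is surjective and
its kernel is superfluous in `P`. -/
def IsProjCover {P M : ModuleCat.{0} Λ} (f : P →ₗ[Λ] M) : Prop :=
  Module.Projective Λ P ∧ Function.Surjective f ∧
    ∀ N : Submodule Λ P, N ⊔ LinearMap.ker f = ⊤ → N = ⊤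

/-- `Y` is (isomorphic to) the first syzygy `Ω M`, i.e. the kernel of a
projective cover of `M`. -/
def IsSyzygy (Y M : ModuleCat.{0} Λ) : Prop :=
  ∃ (P : ModuleCat.{0} Λ) (f : P →ₗ[Λ] M), IsProjCover Λ f ∧
    Nonempty (Y ≃ₗ[Λ] LinearMap.ker f)

/-- `Y` is (isomorphic to) the `n`-th syzygy `Ω^n M`. -/
def IsNthSyzygy : ℕ → ModuleCat.{0} Λ → ModuleCat.{0} Λ → Prop
  | 0, Y, M => Nonempty (Y ≃ₗ[Λ] M)
  | n + 1, Y, M => ∃ Z : ModuleCat.{0} Λ, IsSyzygy Λ Z M ∧ IsNthSyzygy n Y Z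

/-- `M` is `Ω`-periodic: `Ω^k M ≅ M` for some `k ≥ 1`. -/
def IsPeriodic (M : ModuleCat.{0} Λ) : Prop :=
  ∃ k : ℕ, 1 ≤ k ∧ IsNthSyzygy Λ k M M

/-- Projective dimension at most `n` (via minimal projective resolutions:
the `n`-th syzygy is projective). -/
def PdimLE (M : ModuleCat.{0} Λ) (n : ℕ) : Prop :=
  ∃ Y : ModuleCat.{0} Λ, IsNthSyzygy Λ n Y M ∧ Module.Projective Λ Y

/-- `M` has infinite projective dimension. -/
def HasInfinitePdim (M : ModuleCat.{0} Λ) : Prop :=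
  ¬ ∃ n : ℕ, PdimLE Λ M n

/-- The (left) global dimension is at most `n`: every finitely generated module
has projective dimension at most `n`. -/
def GlobalDimLE (n : ℕ) : Prop :=
  ∀ M : ModuleCat.{0} Λ, Module.Finite Λ M → PdimLE Λ M n

/-- `Λ` has infinite global dimension. -/
def HasInfiniteGlobalDim : Prop := ¬ ∃ n : ℕ, GlobalDimLE Λ n

/-- `M` has composition length `n`. -/
def HasLength (M : ModuleCat.{0} Λ) (n : ℕ) : Prop :=
  ∃ s : CompositionSeries (Submodule Λ M), s.head = ⊥ ∧ s.last = ⊤ ∧ s.length = n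

/-- The socle of a uniserial module: the smallest nonzero submodule. -/
def socle (M : Type) [AddCommGroup M] [Module Λ M] : Submodule Λ M :=
  sInf {N : Submodule Λ M | N ≠ ⊥}

/-- The radical of a uniserial (local) module: the largest proper submodule. -/
def radical (M : Type) [AddCommGroup M] [Module Λ M] : Submodule Λ M :=
  sSup {N : Submodule Λ M | N ≠ ⊤}

/-- `soc M ≅ T`. -/
def SocIso (M T : ModuleCat.{0} Λ) : Prop :=
  Nonempty (socle Λ M ≃ₗ[Λ] T)

/-- `top M = M / rad M ≅ T`. -/
def TopIso (M T : ModuleCat.{0} Λ) : Prop :=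
  Nonempty ((M ⧸ radical Λ M) ≃ₗ[Λ] T)

/-- `T` is a composition factor (a simple subquotient) of `M`. -/
def IsCompFactorOf (T M : ModuleCat.{0} Λ) : Prop :=
  ∃ (N₁ : Submodule Λ M) (N₀ : Submodule Λ N₁),
    Nonempty ((N₁ ⧸ N₀) ≃ₗ[Λ] T)

/-- The number of composition factors of a composition series `s` of `M`
isomorphic to `T`. -/
def factorCount (M : ModuleCat.{0} Λ) (s : CompositionSeries (Submodule Λ M))
    (T : ModuleCat.{0} Λ) : ℕ :=
  Nat.card {i : Fin s.length //
    Nonempty ((s i.succ ⧸ Submodule.comap (s i.succ).subtype (s i.castSucc)) ≃ₗ[Λ] T)}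

/-! ### The Igusa–Todorov function φ -/

/-- Finitely generated modules. -/
def FGMod := {M : ModuleCat.{0} Λ // Module.Finite Λ M}

/-- Generators of the relations defining `K₀`: `[C] - [A] - [B]` for `C ≅ A ⊕ B`,
and `[P]` for `P` projective. -/
def K0RelSet : Set (FreeAbelianGroup (FGMod Λ)) :=
  {x | ∃ A B C : FGMod Λ, Nonempty ((C.1 : Type) ≃ₗ[Λ] ((A.1 : Type) × (B.1 : Type))) ∧
        x = FreeAbelianGroup.of C - FreeAbelianGroup.of A - FreeAbelianGroup.of B} ∪
  {x | ∃ P : FGMod Λ, Module.Projective Λ P.1 ∧ x = FreeAbelianGroup.of P}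

def K0Rel : AddSubgroup (FreeAbelianGroup (FGMod Λ)) :=
  AddSubgroup.closure (K0RelSet Λ)

/-- `K₀`: the free abelian group on finitely generated modules, modulo
`[A ⊕ B] = [A] + [B]` and `[P] = 0` for projective `P`. -/
def K0 := FreeAbelianGroup (FGMod Λ) ⧸ K0Rel Λ

instance : AddCommGroup (K0 Λ) := QuotientAddGroup.Quotient.addCommGroup _

/-- The class `[M]` of a finitely generated module in `K₀`. -/
def classOf (M : FGMod Λ) : K0 Λ := QuotientAddGroup.mk (FreeAbelianGroup.of M)

/-- Generators of the subgroup `L^t ⟨add M⟩` of `K₀`: classes of `t`-th syzygies of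
the indecomposable direct summands of `M`. -/
def addGens (M : ModuleCat.{0} Λ) (t : ℕ) : Set (K0 Λ) :=
  {k | ∃ X : ModuleCat.{0} Λ, Indec Λ X ∧ IsSummand Λ X M ∧
        ∃ Y : FGMod Λ, IsNthSyzygy Λ t Y.1 X ∧ k = classOf Λ Y}

/-- The rank of `L^t ⟨add M⟩`. -/
def syzygyRank (M : ModuleCat.{0} Λ) (t : ℕ) : Cardinal :=
  Module.rank ℤ (AddSubgroup.closure (addGens Λ M t))

/-- The Igusa–Todorov function
`φ(M) = min { t | rank L^t ⟨add M⟩ = rank L^{t+j} ⟨add M⟩ for all j ≥ 1 }`. -/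
def phi (M : ModuleCat.{0} Λ) : ℕ :=
  sInf {t : ℕ | ∀ j : ℕ, 1 ≤ j → syzygyRank Λ M (t + j) = syzygyRank Λ M t}

/-- `φdim Λ = sup { φ(M) | M a finitely generated Λ-module }`. -/
def phiDim : ℕ∞ := ⨆ M : FGMod Λ, (phi Λ M.1 : ℕ∞)

/-- Isomorphism of modules as a setoid on `ModuleCat Λ`. -/
def isoSetoid : Setoid (ModuleCat.{0} Λ) where
  r M N := Nonempty (M ≃ₗ[Λ] N)
  iseqv := ⟨fun M => ⟨LinearEquiv.refl Λ M⟩, fun ⟨e⟩ => ⟨e.symm⟩, fun ⟨e⟩ ⟨f⟩ => ⟨e.trans f⟩⟩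

/-- `α(X)`: the number of pairwise non-isomorphic, non-projective, indecomposable
direct summands of `X`. -/
def alpha (X : ModuleCat.{0} Λ) : ℕ :=
  Nat.card {c : Quotient (isoSetoid Λ) // ∃ Y : ModuleCat.{0} Λ,
    Quotient.mk (isoSetoid Λ) Y = c ∧ Indec Λ Y ∧ ¬ Module.Projective Λ Y ∧ IsSummand Λ Y X}

/-! ### Cyclic Nakayama algebras presented by monomial relations -/

/-- A cyclic Nakayama artin algebra `Λ` on `N ≥ 3` vertices, presented by an
irredundant system of `r` monomial relations `α_{k_{2j}} ⋯ α_{k_{2j-1}} = 0`.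

* `S i` (for `i : ZMod N`) are the simple modules attached to the vertices of the
  cyclic quiver, `P i` a projective cover of `S i`, and `c i` the composition length
  of `P i` (the Kupisch series).
* `layer` expresses that the arrows of the quiver are exactly `α_i : i → i+1`:
  the radical of an indecomposable module with top `S i`, when nonzero, has top `S (i+1)`.
* `kOdd j = k_{2j-1}` and `kEven j = k_{2j}` record the start and end indices of the
  `j`-th relation; irredundancy and completeness of the system of relations is recorded
  by `relation_starts` (the chain of inclusions `P_v ↪ P_{v-1}` breaks exactly at the
  starting vertices of the relations); `relation_ends` says that the `j`-th relation
  is a path from `k_{2j-1}` to `k_{2j} + 1` consisting of `c (k_{2j-1})` arrows. -/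
structure CyclicNakayama (R : Type) (Λ : Type) [CommRing R] [Ring Λ] [Algebra R Λ] where
  artinianBase : IsArtinianRing R
  finiteAlgebra : Module.Finite R Λ
  N : ℕ
  three_le_N : 3 ≤ N
  r : ℕ
  one_le_r : 1 ≤ r
  S : ZMod N → ModuleCat.{0} Λ
  S_simple : ∀ i, IsSimpleModule Λ (S i)
  S_complete : ∀ T : ModuleCat.{0} Λ, IsSimpleModule Λ T → ∃ i, Nonempty (T ≃ₗ[Λ] S i)
  S_distinct : ∀ i j, Nonempty (S i ≃ₗ[Λ] S j) → i = j
  nakayama : ∀ M : ModuleCat.{0} Λ, Module.Finite Λ M → Indec Λ M → IsUniserial Λ M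
  P : ZMod N → ModuleCat.{0} Λ
  P_finite : ∀ i, Module.Finite Λ (P i)
  P_projective : ∀ i, Module.Projective Λ (P i)
  P_cover : ∀ i, ∃ f : P i →ₗ[Λ] S i, IsProjCover Λ f
  c : ZMod N → ℕ
  P_length : ∀ i, HasLength Λ (P i) (c i)
  two_le_c : ∀ i, 2 ≤ c i
  layer : ∀ M : ModuleCat.{0} Λ, Module.Finite Λ M → Indec Λ M → ∀ i : ZMod N,
    TopIso Λ M (S i) → radical Λ M ≠ ⊥ →
      TopIso Λ (ModuleCat.of Λ (radical Λ M)) (S (i + 1))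
  kOdd : ZMod r → ZMod N
  kEven : ZMod r → ZMod N
  kOdd_mono : ∀ j j' : ZMod r, j.val < j'.val → (kOdd j).val < (kOdd j').val
  relation_starts : ∀ v : ZMod N, (∃ j, kOdd j = v) ↔ c v ≠ c (v + 1) + 1
  relation_ends : ∀ j, kEven j + 1 = kOdd j + (c (kOdd j) : ZMod N)
  soc_min : ∀ j, SocIso Λ (P (kOdd j)) (S (kEven j))
  soc_classes : ∀ v : ZMod N, ∃ j, SocIso Λ (P v) (S (kEven j))

variable {R : Type} [CommRing R]
variable {Λ} [Algebra R Λ]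

/-- `D` is (a representative of) the module `Δ_j`: a shortest indecomposable module
with top `S_{k_{2(j-1)} + 1}` and socle `S_{k_{2j}}`. -/
def IsDelta (pres : CyclicNakayama R Λ) (j : ZMod pres.r) (D : ModuleCat.{0} Λ) : Prop :=
  Module.Finite Λ D ∧ Indec Λ D ∧
    TopIso Λ D (pres.S (pres.kEven (j - 1) + 1)) ∧ SocIso Λ D (pres.S (pres.kEven j)) ∧
    ∀ D' : ModuleCat.{0} Λ, Module.Finite Λ D' → Indec Λ D' →
      TopIso Λ D' (pres.S (pres.kEven (j - 1) + 1)) → SocIso Λ D' (pres.S (pres.kEven j)) →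
      ∀ n n' : ℕ, HasLength Λ D n → HasLength Λ D' n' → n ≤ n'

/-- `M` is a `Δ`-module: it admits a finite filtration whose successive subquotients
are isomorphic to modules among `Δ_1, …, Δ_r`. -/
def IsDeltaModule (pres : CyclicNakayama R Λ) (Δ : ZMod pres.r → ModuleCat.{0} Λ)
    (M : ModuleCat.{0} Λ) : Prop :=
  ∃ (n : ℕ) (F : Fin (n + 1) → Submodule Λ M), Monotone F ∧ F 0 = ⊥ ∧ F (Fin.last n) = ⊤ ∧
    ∀ i : Fin n, ∃ j : ZMod pres.r,
      Nonempty ((F i.succ ⧸ Submodule.comap (F i.succ).subtype (F i.castSucc)) ≃ₗ[Λ] Δ j)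

end PhiDim

namespace PhiDim

/-! ### Uniserial modules and length -/

section Uniserial

variable {A : Type} [Ring A]

/-- Unbundled form of `IsUniserial`. -/
def Uni (A M : Type) [Ring A] [AddCommGroup M] [Module A M] : Prop :=
  ∀ N₁ N₂ : Submodule A M, N₁ ≤ N₂ ∨ N₂ ≤ N₁

variable {M M' T : Type} [AddCommGroup M] [Module A M] [AddCommGroup M'] [Module A M']
  [AddCommGroup T] [Module A T]

lemma Uni.of_injective (h : Uni A M) (f : M' →ₗ[A] M) (hf : Function.Injective f) :
    Uni A M' := by
  intro N₁ N₂
  rcases h (N₁.map f) (N₂.map f) with h | h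
  · exact .inl ((Submodule.map_le_map_iff_of_injective hf _ _).1 h)
  · exact .inr ((Submodule.map_le_map_iff_of_injective hf _ _).1 h)

lemma Uni.of_surjective (h : Uni A M) (f : M →ₗ[A] M') (hf : Function.Surjective f) :
    Uni A M' := by
  intro N₁ N₂
  rcases h (N₁.comap f) (N₂.comap f) with h | h
  · exact .inl ((Submodule.comap_le_comap_iff_of_surjective hf).1 h)
  · exact .inr ((Submodule.comap_le_comap_iff_of_surjective hf).1 h)

lemma Uni.indec (h : Uni A M) [Nontrivial M] : Indec A (ModuleCat.of A M) := by
  refine ⟨‹_›, fun N N' hc => ?_⟩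
  rcases h N N' with h | h
  · exact .inl (le_bot_iff.1 (hc.disjoint le_rfl h))
  · exact .inr (le_bot_iff.1 (hc.disjoint h le_rfl))

lemma isCoatom_ker [IsSimpleModule A T] (f : M →ₗ[A] T) (hf : Function.Surjective f) :
    IsCoatom (LinearMap.ker f) := by
  rw [← isSimpleModule_iff_isCoatom]
  exact IsSimpleModule.congr (f.quotKerEquivOfSurjective hf)

/-- In a uniserial module, any proper submodule lies in the kernel of any
surjection onto a simple module. -/
lemma Uni.le_ker (h : Uni A M) [IsSimpleModule A T] (f : M →ₗ[A] T)
    (hf : Function.Surjective f) {N : Submodule A M} (hN : N ≠ ⊤) : N ≤ LinearMap.ker f := by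
  rcases h N (LinearMap.ker f) with h | h
  · exact h
  · rcases h.eq_or_lt with h | h
    · exact h.ge
    · exact absurd ((isCoatom_ker f hf).2 _ h) hN

lemma Uni.radical_eq (h : Uni A M) [IsSimpleModule A T] (f : M →ₗ[A] T)
    (hf : Function.Surjective f) : radical A M = LinearMap.ker f :=
  le_antisymm (sSup_le fun _ hN => h.le_ker f hf hN) (le_sSup (isCoatom_ker f hf).1)

/-- A map into a uniserial module which stays surjective after composition with a
surjection onto a simple module is surjective. -/
lemma Uni.surjective_of_comp (h : Uni A M) [IsSimpleModule A T] (f : M →ₗ[A] T)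
    (g : M' →ₗ[A] M) (hfg : Function.Surjective (f ∘ₗ g)) : Function.Surjective g := by
  have hf : Function.Surjective f := fun y => let ⟨x, hx⟩ := hfg y; ⟨g x, hx⟩
  rw [← LinearMap.range_eq_top]
  by_contra hne
  have hle := h.le_ker f hf hne
  have := IsSimpleModule.nontrivial A T
  obtain ⟨t, ht⟩ := exists_ne (0 : T)
  obtain ⟨x, rfl⟩ := hfg t
  exact ht (hle ⟨x, rfl⟩)

lemma isCompl_ker_range {t : M →ₗ[A] M'} {s : M' →ₗ[A] M} (h : t ∘ₗ s = LinearMap.id) :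
    IsCompl (LinearMap.ker t) (LinearMap.range s) := by
  have hts : ∀ y, t (s y) = y := fun y => LinearMap.congr_fun h y
  rw [isCompl_iff, Submodule.disjoint_def, codisjoint_iff_le_sup]
  refine ⟨?_, fun x _ => Submodule.mem_sup.2 ⟨x - s (t x), ?_, s (t x), ⟨_, rfl⟩, by abel⟩⟩
  · rintro _ hx ⟨y, rfl⟩
    rw [LinearMap.mem_ker, hts] at hx
    rw [hx, map_zero]
  · rw [LinearMap.mem_ker, map_sub, hts, sub_self]

lemma length_eq_ker_add (f : M →ₗ[A] M') (hf : Function.Surjective f) :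
    Module.length A M = Module.length A (LinearMap.ker f) + Module.length A M' :=
  Module.length_eq_add_of_exact _ f (Submodule.subtype_injective _) hf
    (LinearMap.exact_subtype_ker_map f)

lemma length_eq_sub_add (N : Submodule A M) :
    Module.length A M = Module.length A N + Module.length A (M ⧸ N) :=
  Module.length_eq_add_of_exact N.subtype N.mkQ (Submodule.subtype_injective _)
    (Submodule.mkQ_surjective _) (by rw [LinearMap.exact_iff]; simp)

lemma eq_of_le_of_length [IsArtinian A M] [IsNoetherian A M] {N N' : Submodule A M}
    (hle : N ≤ N') (h : Module.length A N' ≤ Module.length A N) : N = N' := by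
  by_contra hne
  rw [Module.length_submodule, Module.length_submodule] at h
  exact absurd (Submodule.height_strictMono (lt_of_le_of_ne hle hne)) (not_lt.2 h)

lemma Uni.le_of_length (h : Uni A M) [IsArtinian A M] [IsNoetherian A M]
    {N N' : Submodule A M} (hl : Module.length A N ≤ Module.length A N') : N ≤ N' := by
  rcases h N N' with h | h
  · exact h
  · exact (eq_of_le_of_length h hl).ge

lemma Uni.eq_of_length (h : Uni A M) [IsArtinian A M] [IsNoetherian A M]
    {N N' : Submodule A M} (hl : Module.length A N = Module.length A N') : N = N' :=
  le_antisymm (h.le_of_length hl.le) (h.le_of_length hl.ge)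

lemma length_simple [IsSimpleModule A T] : Module.length A T = 1 := by
  exact Module.length_eq_one A T

lemma HasLength.length_eq {n : ℕ} (h : HasLength A (ModuleCat.of A M) n) :
    Module.length A M = n := by
  obtain ⟨s, h0, h1, rfl⟩ := h
  exact (Module.length_compositionSeries s h0 h1).symm

lemma hasLength_of_length_eq {n : ℕ} (h : Module.length A M = n) :
    HasLength A (ModuleCat.of A M) n := by
  have hfl : IsFiniteLength A M := Module.length_ne_top_iff.1 (by rw [h]; exact ENat.natCast_ne_top n)
  obtain ⟨s, h0, h1⟩ := isFiniteLength_iff_exists_compositionSeries.1 hfl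
  refine ⟨s, h0, h1, ?_⟩
  have := Module.length_compositionSeries s h0 h1
  rw [h] at this
  exact_mod_cast this

end Uniserial

/-! ### Interval modules -/

section Intervals

variable {R Λ : Type} [CommRing R] [Ring Λ] [Algebra R Λ] (pres : CyclicNakayama R Λ)

/-- `M` is a finitely generated uniserial module of length `l` with top `S a`; the top is
recorded through the existence of a surjection onto `S a`. Such a module has composition
factors `S a, S (a+1), …, S (a+l-1)`, listed from the top. -/
structure IsInterval (a : ZMod pres.N) (l : ℕ) (M : Type) [AddCommGroup M] [Module Λ M] :
    Prop where
  fin : Module.Finite Λ M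
  uni : Uni Λ M
  length : Module.length Λ M = l
  top : ∃ f : M →ₗ[Λ] pres.S a, Function.Surjective f

instance (i : ZMod pres.N) : IsSimpleModule Λ (pres.S i) := pres.S_simple i

lemma CyclicNakayama.isArtinianRing (pres : CyclicNakayama R Λ) : IsArtinianRing Λ := by
  have := pres.artinianBase
  have := pres.finiteAlgebra
  exact IsArtinianRing.of_finite R Λ

variable {pres}
variable {M M' : Type} [AddCommGroup M] [Module Λ M] [AddCommGroup M'] [Module Λ M']
variable {a b : ZMod pres.N} {l l' : ℕ}

lemma IsInterval.nontrivial (h : IsInterval pres a l M) : Nontrivial M := by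
  obtain ⟨f, hf⟩ := h.top
  have := IsSimpleModule.nontrivial Λ (pres.S a)
  exact hf.nontrivial

lemma IsInterval.one_le (h : IsInterval pres a l M) : 1 ≤ l := by
  have := h.nontrivial
  have h0 : 0 < Module.length Λ M := Module.length_pos
  rw [h.length] at h0
  exact_mod_cast h0

lemma IsInterval.congr (h : IsInterval pres a l M) (e : M ≃ₗ[Λ] M') :
    IsInterval pres a l M' := by
  have := h.fin
  refine ⟨Module.Finite.equiv e, h.uni.of_injective e.symm.toLinearMap e.symm.injective,
    by rw [← e.length_eq, h.length], ?_⟩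
  obtain ⟨f, hf⟩ := h.top
  exact ⟨f ∘ₗ e.symm.toLinearMap, hf.comp e.symm.surjective⟩

lemma IsInterval.indec (h : IsInterval pres a l M) : Indec Λ (ModuleCat.of Λ M) := by
  have := h.nontrivial
  exact h.uni.indec

lemma IsInterval.topIso (h : IsInterval pres a l M) :
    TopIso Λ (ModuleCat.of Λ M) (pres.S a) := by
  obtain ⟨f, hf⟩ := h.top
  exact ⟨(Submodule.quotEquivOfEq _ _ (h.uni.radical_eq f hf)).trans
    (f.quotKerEquivOfSurjective hf)⟩

lemma exists_surjective_of_topIso (h : TopIso Λ (ModuleCat.of Λ M) (pres.S a)) :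
    ∃ f : M →ₗ[Λ] pres.S a, Function.Surjective f := by
  obtain ⟨e⟩ := h
  exact ⟨e.toLinearMap ∘ₗ (radical Λ M).mkQ, e.surjective.comp (Submodule.mkQ_surjective _)⟩

/-- Every nonzero finitely generated uniserial module is an interval module. -/
lemma exists_isInterval [Nontrivial M] (hfin : Module.Finite Λ M) (hu : Uni Λ M) :
    ∃ a l, IsInterval pres a l M := by
  have := pres.isArtinianRing
  obtain ⟨m, hm, -⟩ := (eq_top_or_exists_le_coatom (⊥ : Submodule Λ M)).resolve_left bot_ne_top
  have hs : IsSimpleModule Λ (M ⧸ m) := isSimpleModule_iff_isCoatom.2 hm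
  obtain ⟨i, ⟨e⟩⟩ := pres.S_complete (ModuleCat.of Λ (M ⧸ m)) hs
  obtain ⟨l, hl⟩ := ENat.ne_top_iff_exists.1 (Module.length_ne_top (R := Λ) (M := M))
  exact ⟨i, l, hfin, hu, hl.symm, e.toLinearMap ∘ₗ m.mkQ,
    e.surjective.comp (Submodule.mkQ_surjective _)⟩

lemma IsInterval.length_ker (h : IsInterval pres a l M) {f : M →ₗ[Λ] pres.S b}
    (hf : Function.Surjective f) : Module.length Λ (LinearMap.ker f) = ((l - 1 : ℕ) : ℕ∞) := by
  have h1 := length_eq_ker_add f hf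
  rw [h.length, length_simple (T := pres.S b)] at h1
  obtain ⟨k, hk⟩ := ENat.ne_top_iff_exists.1
    (show Module.length Λ (LinearMap.ker f) ≠ ⊤ by intro h0; rw [h0] at h1; simp at h1)
  rw [← hk] at h1 ⊢
  norm_cast at h1 ⊢
  omega

/-- Passing to the radical removes the top composition factor. -/
lemma IsInterval.ker (h : IsInterval pres a l M) {f : M →ₗ[Λ] pres.S a}
    (hf : Function.Surjective f) (hl : 2 ≤ l) :
    IsInterval pres (a + 1) (l - 1) (LinearMap.ker f) := by
  have := pres.isArtinianRing
  have := h.fin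
  have hlen := h.length_ker hf
  refine ⟨inferInstance, h.uni.of_injective _ (Submodule.subtype_injective _), hlen, ?_⟩
  have hr := h.uni.radical_eq f hf
  have hne : radical Λ M ≠ ⊥ := by
    rw [hr]
    intro h0
    rw [h0, Module.length_bot] at hlen
    have : l - 1 = 0 := by exact_mod_cast hlen.symm
    omega
  have := pres.layer (ModuleCat.of Λ M) h.fin h.indec a h.topIso hne
  obtain ⟨g, hg⟩ := exists_surjective_of_topIso this
  refine ⟨g ∘ₗ (LinearEquiv.ofEq _ _ hr.symm).toLinearMap, hg.comp (LinearEquiv.surjective _)⟩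

/-- Iterating the radical `d` times shifts the top by `d`. -/
lemma IsInterval.exists_sub (h : IsInterval pres a l M) (d : ℕ) (hd : d < l) :
    ∃ K : Submodule Λ M, IsInterval pres (a + d) (l - d) K := by
  induction d with
  | zero => exact ⟨⊤, by simpa using h.congr Submodule.topEquiv.symm⟩
  | succ d ih =>
    obtain ⟨K, hK⟩ := ih (by omega)
    obtain ⟨f, hf⟩ := hK.top
    have := hK.ker hf (by omega)
    refine ⟨(LinearMap.ker f).map K.subtype, ?_⟩
    have := this.congr (K.equivSubtypeMap _)
    rw [Nat.cast_succ, ← add_assoc]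
    exact this

lemma IsInterval.exists_sub' (h : IsInterval pres a l M) (k : ℕ) (hk : k ≤ l) :
    ∃ K : Submodule Λ M, Module.length Λ K = k := by
  rcases Nat.eq_zero_or_pos k with rfl | hk0
  · exact ⟨⊥, by simp⟩
  · obtain ⟨K, hK⟩ := h.exists_sub (l - k) (by omega)
    exact ⟨K, by rw [hK.length]; congr 1; omega⟩

/-- A nonzero submodule consists of the last composition factors: in a uniserial module
it is determined by its length, hence equal to an iterated radical. -/
lemma IsInterval.sub (h : IsInterval pres a l M) {k : ℕ} (K : Submodule Λ M)
    (hK : Module.length Λ K = k) (hk : 1 ≤ k) : IsInterval pres (a + l - k) k K := by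
  have := pres.isArtinianRing
  have := h.fin
  have hkl : k ≤ l := by
    have := Module.length_le_of_injective K.subtype K.subtype_injective
    rw [hK, h.length] at this
    exact_mod_cast this
  obtain ⟨K', hK'⟩ := h.exists_sub (l - k) (by omega)
  have e : l - (l - k) = k := by omega
  have : K = K' := h.uni.eq_of_length (by rw [hK, hK'.length, e])
  subst this
  rw [e, Nat.cast_sub hkl, ← add_sub_assoc] at hK'
  exact hK'

/-- A nonzero quotient has the same top. -/
lemma IsInterval.quot (h : IsInterval pres a l M) {k : ℕ} (g : M →ₗ[Λ] M')
    (hg : Function.Surjective g) (hk : Module.length Λ M' = k) (hk1 : 1 ≤ k) :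
    IsInterval pres a k M' := by
  have := h.fin
  refine ⟨Module.Finite.of_surjective g hg, h.uni.of_surjective g hg, hk, ?_⟩
  obtain ⟨f, hf⟩ := h.top
  have hne : LinearMap.ker g ≠ ⊤ := by
    intro h0
    rw [LinearMap.ker_eq_top] at h0
    subst h0
    have : Subsingleton M' := ⟨fun x y => by
      obtain ⟨x, rfl⟩ := hg x
      obtain ⟨y, rfl⟩ := hg y
      rfl⟩
    rw [Module.length_eq_zero] at hk
    have : k = 0 := by exact_mod_cast hk.symm
    omega
  have hle := h.uni.le_ker f hf hne
  refine ⟨(LinearMap.ker g).liftQ f hle ∘ₗ (g.quotKerEquivOfSurjective hg).symm.toLinearMap,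
    ?_⟩
  rw [LinearMap.coe_comp]
  refine Function.Surjective.comp ?_ (g.quotKerEquivOfSurjective hg).symm.surjective
  intro y
  obtain ⟨x, rfl⟩ := hf y
  exact ⟨Submodule.Quotient.mk x, by simp⟩

lemma IsInterval.eq_of_one {i : ZMod pres.N} (h : IsInterval pres a 1 M)
    (e : Nonempty (M ≃ₗ[Λ] pres.S i)) : a = i := by
  obtain ⟨f, hf⟩ := h.top
  have hk := h.length_ker hf
  have hb : LinearMap.ker f = ⊥ := by
    rw [← Submodule.subsingleton_iff_eq_bot, ← Module.length_eq_zero_iff (R := Λ), hk]; rfl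
  let e' := LinearEquiv.ofBijective f ⟨LinearMap.ker_eq_bot.1 hb, hf⟩
  obtain ⟨e⟩ := e
  exact pres.S_distinct _ _ ⟨e'.symm.trans e⟩

/-- The socle of an interval module is the last composition factor. -/
lemma IsInterval.socIso (h : IsInterval pres a l M) :
    SocIso Λ (ModuleCat.of Λ M) (pres.S (a + l - 1)) := by
  have := pres.isArtinianRing
  have := h.fin
  obtain ⟨K, hK⟩ := h.exists_sub' 1 h.one_le
  have hI := h.sub K hK le_rfl
  have hs : socle Λ M = K := by
    refine le_antisymm (sInf_le ?_) (le_sInf fun N hN => h.uni.le_of_length ?_)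
    · rintro rfl
      rw [Module.length_bot] at hK
      exact absurd hK (by simp)
    · rw [hK]
      have : Nontrivial N := Submodule.nontrivial_iff_ne_bot.2 hN
      have := Module.length_pos (R := Λ) (M := N)
      exact_mod_cast Order.one_le_iff_pos.2 this
  have hS : IsSimpleModule Λ K := Module.length_eq_one_iff.1 (by rw [hK]; rfl)
  obtain ⟨i, ⟨e⟩⟩ := pres.S_complete (ModuleCat.of Λ K) hS
  have hi := hI.eq_of_one ⟨e⟩
  rw [Nat.cast_one] at hi
  exact ⟨(LinearEquiv.ofEq _ _ hs).trans (hi ▸ e)⟩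

lemma IsInterval.soc_unique (h : IsInterval pres a l M) {i : ZMod pres.N}
    (hi : SocIso Λ (ModuleCat.of Λ M) (pres.S i)) : a + l - 1 = i := by
  obtain ⟨e⟩ := h.socIso
  obtain ⟨e'⟩ := hi
  exact pres.S_distinct _ _ ⟨e.symm.trans e'⟩

/-! ### Projective covers -/

variable (pres) in
/-- The indecomposable projective `P a` is the interval module of length `c a` at `a`. -/
lemma isInterval_P (a : ZMod pres.N) : IsInterval pres a (pres.c a) (pres.P a) := by
  obtain ⟨f, -, hf, hs⟩ := pres.P_cover a
  have := IsSimpleModule.nontrivial Λ (pres.S a)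
  have hc := isCoatom_ker f hf
  have hind : Indec Λ (pres.P a) := by
    refine ⟨hf.nontrivial, fun N N' hN => ?_⟩
    have key : ∀ N : Submodule Λ (pres.P a), N ≤ LinearMap.ker f ∨ N = ⊤ := fun N => by
      by_cases h : N ≤ LinearMap.ker f
      · exact .inl h
      · exact .inr (hs N (hc.2 _ (by rw [right_lt_sup]; exact h)))
    rcases key N with h | h
    · rcases key N' with h' | h'
      · exact absurd (top_le_iff.1 (hN.codisjoint.top_le.trans (sup_le h h'))) hc.1
      · exact .inl (by have := hN.disjoint.eq_bot; rwa [h', inf_top_eq] at this)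
    · exact .inr (by have := hN.disjoint.eq_bot; rwa [h, top_inf_eq] at this)
  exact ⟨pres.P_finite a, pres.nakayama _ (pres.P_finite a) hind,
    HasLength.length_eq (pres.P_length a), f, hf⟩

lemma IsInterval.exists_cover (h : IsInterval pres a l M) :
    ∃ g : pres.P a →ₗ[Λ] M, Function.Surjective g := by
  obtain ⟨p, hp⟩ := (isInterval_P pres a).top
  obtain ⟨f, hf⟩ := h.top
  have := pres.P_projective a
  obtain ⟨g, hg⟩ := Module.projective_lifting_property f p hf
  exact ⟨g, h.uni.surjective_of_comp f g (by rw [hg]; exact hp)⟩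

lemma IsInterval.length_ker_cover (h : IsInterval pres a l M) {g : pres.P a →ₗ[Λ] M}
    (hg : Function.Surjective g) :
    l ≤ pres.c a ∧ Module.length Λ (LinearMap.ker g) = ((pres.c a - l : ℕ) : ℕ∞) := by
  have h1 := length_eq_ker_add g hg
  rw [(isInterval_P pres a).length, h.length] at h1
  obtain ⟨k, hk⟩ := ENat.ne_top_iff_exists.1
    (show Module.length Λ (LinearMap.ker g) ≠ ⊤ by intro h0; rw [h0] at h1; simp at h1)
  rw [← hk] at h1 ⊢
  norm_cast at h1 ⊢
  omega

/-- An interval module is determined by its top and its length. -/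
lemma IsInterval.equiv (h : IsInterval pres a l M) (h' : IsInterval pres a l M') :
    Nonempty (M ≃ₗ[Λ] M') := by
  have := pres.isArtinianRing
  have := pres.P_finite a
  obtain ⟨g, hg⟩ := h.exists_cover
  obtain ⟨g', hg'⟩ := h'.exists_cover
  have := (isInterval_P pres a).uni.eq_of_length
    ((h.length_ker_cover hg).2.trans (h'.length_ker_cover hg').2.symm)
  exact ⟨(g.quotKerEquivOfSurjective hg).symm.trans
    ((Submodule.quotEquivOfEq _ _ this).trans (g'.quotKerEquivOfSurjective hg'))⟩

/-- The Kupisch inequality: `rad P_v` is a quotient of `P_{v+1}`. -/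
lemma kupisch (v : ZMod pres.N) : pres.c v ≤ pres.c (v + 1) + 1 := by
  obtain ⟨f, hf⟩ := (isInterval_P pres v).top
  have h := (isInterval_P pres v).ker hf (pres.two_le_c v)
  obtain ⟨g, hg⟩ := h.exists_cover
  have := (h.length_ker_cover hg).1
  omega

/-! ### Syzygies -/

variable (pres) in
/-- The socle of every indecomposable projective is some `S (kEven j)`. -/
lemma end_mem_range (a : ZMod pres.N) : a + pres.c a - 1 ∈ Set.range pres.kEven := by
  obtain ⟨j, hj⟩ := pres.soc_classes a
  exact ⟨j, ((isInterval_P pres a).soc_unique hj).symm⟩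

lemma IsSyzygy.subsingleton {X Z : ModuleCat.{0} Λ} [Subsingleton X] (h : IsSyzygy Λ Z X) :
    Subsingleton Z := by
  obtain ⟨P, f, ⟨-, -, hs⟩, ⟨e⟩⟩ := h
  have hk : LinearMap.ker f = ⊤ := by
    rw [LinearMap.ker_eq_top]
    ext x
    exact Subsingleton.elim _ _
  have h0 : (⊥ : Submodule Λ P) = ⊤ := hs ⊥ (by rw [hk, sup_top_eq])
  rw [hk, ← h0] at e
  exact e.subsingleton

/-- The syzygy of the interval `(a, l)` is zero or the interval `(a + l, c a - l)`.
Any projective cover `P` of an interval module with top `S a` is isomorphic to `P a`: the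
induced map `P a → P` is onto by superfluity, hence split, and `P a` is indecomposable. -/
lemma IsInterval.syzygy {X Z : ModuleCat.{0} Λ} (h : IsInterval pres a l X)
    (hs : IsSyzygy Λ Z X) :
    Subsingleton Z ∨ (l ≤ pres.c a ∧ IsInterval pres (a + l) (pres.c a - l) Z) := by
  obtain ⟨P, f, ⟨hP, hf, hsup⟩, ⟨e⟩⟩ := hs
  obtain ⟨g, hg⟩ := h.exists_cover
  have := pres.P_projective a
  obtain ⟨t, ht⟩ := Module.projective_lifting_property f g hf
  have ht_surj : Function.Surjective t := by
    rw [← LinearMap.range_eq_top]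
    refine hsup _ (eq_top_iff.2 fun x _ => ?_)
    obtain ⟨y, hy⟩ := hg (f x)
    rw [← ht] at hy
    have hy' : f (t y) = f x := hy
    exact Submodule.mem_sup.2 ⟨t y, ⟨y, rfl⟩, x - t y,
      by rw [LinearMap.mem_ker, map_sub, hy', sub_self], by abel⟩
  have hker : LinearMap.ker t = ⊥ := by
    obtain ⟨s, hts⟩ := Module.projective_lifting_property t LinearMap.id ht_surj
    rcases (isInterval_P pres a).indec.2 (LinearMap.ker t) (LinearMap.range s)
      (isCompl_ker_range hts) with h0 | h0
    · exact h0
    · exfalso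
      rw [LinearMap.range_eq_bot] at h0
      have : Nontrivial X := h.nontrivial
      obtain ⟨x, hx⟩ := exists_ne (0 : X)
      obtain ⟨y, rfl⟩ := hf x
      have hy : t (s y) = y := LinearMap.congr_fun hts y
      rw [h0] at hy
      apply hx
      rw [← hy]
      simp
  let E := LinearEquiv.ofBijective t ⟨LinearMap.ker_eq_bot.1 hker, ht_surj⟩
  have hgk : (LinearMap.ker g).map (E : pres.P a →ₗ[Λ] P) = LinearMap.ker f := by
    rw [← ht, LinearMap.ker_comp]
    exact Submodule.map_comap_eq_of_surjective ht_surj _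
  have e' : LinearMap.ker g ≃ₗ[Λ] Z :=
    (E.submoduleMap (LinearMap.ker g)).trans ((LinearEquiv.ofEq _ _ hgk).trans e.symm)
  obtain ⟨hl, hlen⟩ := h.length_ker_cover hg
  rcases Nat.eq_zero_or_pos (pres.c a - l) with h0 | h0
  · left
    rw [h0, Nat.cast_zero, Module.length_eq_zero_iff] at hlen
    exact e'.symm.subsingleton
  · right
    refine ⟨hl, ?_⟩
    have := ((isInterval_P pres a).sub _ hlen h0).congr e'
    rw [Nat.cast_sub hl] at this
    convert this using 1
    ring

variable (pres) in
/-- Either zero, or an interval module whose top is the successor of some `kEven j₁` and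
whose socle is some `kEven j₂`. -/
def IsZeroOrEvenInterval (Y : ModuleCat.{0} Λ) : Prop :=
  Subsingleton Y ∨ ∃ a l, IsInterval pres a l Y ∧
    a - 1 ∈ Set.range pres.kEven ∧ a + l - 1 ∈ Set.range pres.kEven

/-- `Ω (top a, length l)` is `(a + l, c a - l)`, so
`Ω² (top a, length l)` has top `a + c a` and the same socle as `P (a + l)`. -/
lemma second_syzygy {X Z Y : ModuleCat.{0} Λ} (hfin : Module.Finite Λ X) (hu : Uni Λ X)
    (hZ : IsSyzygy Λ Z X) (hY : IsSyzygy Λ Y Z) : IsZeroOrEvenInterval pres Y := by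
  rcases subsingleton_or_nontrivial X with hX | hX
  · have := hZ.subsingleton
    exact .inl hY.subsingleton
  obtain ⟨a, l, h⟩ := exists_isInterval (pres := pres) hfin hu
  rcases h.syzygy hZ with hZ0 | ⟨hl, hZI⟩
  · exact .inl hY.subsingleton
  rcases hZI.syzygy hY with hY0 | ⟨hl', hYI⟩
  · exact .inl hY0
  refine .inr ⟨_, _, hYI, ?_, ?_⟩
  · convert end_mem_range pres a using 1
    rw [Nat.cast_sub hl]; ring
  · convert end_mem_range pres (a + l) using 1
    rw [Nat.cast_sub hl']; ring

lemma syzygy_good {X Z : ModuleCat.{0} Λ} (hfin : Module.Finite Λ X) (hu : Uni Λ X)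
    (hZ : IsSyzygy Λ Z X) (pres : CyclicNakayama R Λ) : Module.Finite Λ Z ∧ Uni Λ Z := by
  have key : Subsingleton Z → Module.Finite Λ Z ∧ Uni Λ Z := fun _ =>
    ⟨inferInstance, fun N₁ N₂ => .inl (Subsingleton.elim N₁ N₂).le⟩
  rcases subsingleton_or_nontrivial X with hX | hX
  · exact key hZ.subsingleton
  obtain ⟨a, l, h⟩ := exists_isInterval (pres := pres) hfin hu
  rcases h.syzygy hZ with h0 | ⟨-, hI⟩
  · exact key h0
  · exact ⟨hI.fin, hI.uni⟩

variable (pres) in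
/-- Syzygies of finitely generated uniserial modules stay in that class, so `Ω^(n+2)` is a
second syzygy of such a module. -/
lemma nth_syzygy (n : ℕ) : ∀ {X Y : ModuleCat.{0} Λ}, Module.Finite Λ X → Uni Λ X →
    IsNthSyzygy Λ (n + 2) Y X → IsZeroOrEvenInterval pres Y := by
  induction n with
  | zero =>
    rintro X Y hfin hu ⟨Z, hZ, Z', ⟨P, f, hf, ⟨e⟩⟩, ⟨e'⟩⟩
    exact second_syzygy hfin hu hZ ⟨P, f, hf, ⟨e'.trans e⟩⟩
  | succ n ih =>
    rintro X Y hfin hu ⟨Z, hZ, hY⟩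
    obtain ⟨h1, h2⟩ := syzygy_good hfin hu hZ pres
    exact ih h1 h2 hY

/-! ### Cyclic order of the relations -/

variable (pres) in
/-- `n + c n`, lifted to `ℤ`: one more than the position of the socle of `P n` on the
universal cover of the cycle. -/
def endPt (n : ℤ) : ℤ := n + (pres.c (n : ZMod pres.N) : ℤ)

lemma endPt_cast (n : ℤ) :
    ((endPt pres n : ℤ) : ZMod pres.N) = n + (pres.c (n : ZMod pres.N) : ZMod pres.N) := by
  simp [endPt]

lemma endPt_le_succ (n : ℤ) : endPt pres n ≤ endPt pres (n + 1) := by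
  have := kupisch (pres := pres) (n : ZMod pres.N)
  simp only [endPt, Int.cast_add, Int.cast_one]
  omega

lemma endPt_mono : Monotone (endPt pres) := monotone_int_of_le_succ endPt_le_succ

/-- `endPt` jumps exactly after the starts of the relations. -/
lemma endPt_eq_succ_iff (n : ℤ) :
    endPt pres n = endPt pres (n + 1) ↔ (n : ZMod pres.N) ∉ Set.range pres.kOdd := by
  have h1 := pres.relation_starts (n : ZMod pres.N)
  have h2 : ((n : ZMod pres.N) ∈ Set.range pres.kOdd) ↔
    ∃ j, pres.kOdd j = (n : ZMod pres.N) := Iff.rfl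
  rw [h2, h1, not_not]
  simp only [endPt, Int.cast_add, Int.cast_one]
  omega

variable (pres) in
/-- On the universal cover, the start of the relation `i + 1` is the next relation start
after that of the relation `i`; for the last `i` it lies one turn further. -/
lemma exists_next_start (i : ZMod pres.r) : ∃ n₀ n₁ : ℤ, n₀ < n₁ ∧
    (n₀ : ZMod pres.N) = pres.kOdd i ∧ (n₁ : ZMod pres.N) = pres.kOdd (i + 1) ∧
    ∀ m, n₀ < m → m < n₁ → (m : ZMod pres.N) ∉ Set.range pres.kOdd := by
  have := pres.one_le_r
  have := pres.three_le_N
  have : NeZero pres.r := ⟨by omega⟩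
  have : NeZero pres.N := ⟨by omega⟩
  have mono : ∀ j j' : ZMod pres.r, j.val ≤ j'.val →
      (pres.kOdd j).val ≤ (pres.kOdd j').val := fun j j' h => by
    rcases h.lt_or_eq with h | h
    · exact (pres.kOdd_mono _ _ h).le
    · rw [ZMod.val_injective _ h]
  have hval : ∀ m : ℤ, 0 ≤ m → m < pres.N → ∀ j, pres.kOdd j = (m : ZMod pres.N) →
      ((pres.kOdd j).val : ℤ) = m := fun m h0 h1 j hj => by
    rw [hj, ZMod.val_intCast, Int.emod_eq_of_lt h0 h1]
  have hlt : ∀ v : ZMod pres.N, v.val < pres.N := fun v => v.val_lt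
  have hi := i.val_lt
  by_cases hlast : i.val + 1 < pres.r
  · have hs : (i + 1).val = i.val + 1 := by
      rw [ZMod.val_add_of_lt, ZMod.val_one'' (by omega)]
      rwa [ZMod.val_one'' (by omega)]
    refine ⟨(pres.kOdd i).val, (pres.kOdd (i + 1)).val, ?_, by simp, by simp, ?_⟩
    · exact_mod_cast pres.kOdd_mono _ _ (by omega)
    · rintro m h0 h1 ⟨j, hj⟩
      have hN := hlt (pres.kOdd (i + 1))
      have e := hval m (by omega) (by omega) j hj
      rcases le_or_gt j.val i.val with h | h
      · have := mono _ _ h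
        omega
      · have := mono (i + 1) j (by omega)
        omega
  · have hs : i + 1 = 0 := by
      have : ((i.val + 1 : ℕ) : ZMod pres.r) = 0 := by
        rw [show i.val + 1 = pres.r by omega, ZMod.natCast_self]
      simpa using this
    have hN := hlt (pres.kOdd i)
    refine ⟨(pres.kOdd i).val, pres.N + (pres.kOdd 0).val, by omega, by simp,
      by simp [hs], ?_⟩
    rintro m h0 h1 ⟨j, hj⟩
    rcases lt_or_ge m pres.N with h | h
    · have e := hval m (by omega) h j hj
      have hj := j.val_lt
      have := mono j i (by omega)
      omega
    · have hN0 := hlt (pres.kOdd 0)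
      have e := hval (m - pres.N) (by omega) (by omega) j (by simp [hj])
      have := mono 0 j (by simp)
      omega

/-- The first relation end met after `kEven i` along the cycle is `kEven (i + 1)`:
`endPt` is monotone and takes no value strictly between its values at the two consecutive
relation starts. -/
lemma kEven_next (i j : ZMod pres.r) (d : ℕ) (hd : 1 ≤ d)
    (hj : pres.kEven i + d = pres.kEven j)
    (hmin : ∀ d' : ℕ, 1 ≤ d' → d' < d → pres.kEven i + d' ∉ Set.range pres.kEven) :
    pres.kEven i + d = pres.kEven (i + 1) := by
  obtain ⟨n₀, n₁, hlt, h0, h1, hno⟩ := exists_next_start pres i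
  have hconst : ∀ m, n₀ + 1 ≤ m → m ≤ n₁ → endPt pres m = endPt pres (n₀ + 1) := by
    intro m hm
    induction m, hm using Int.leInduction with
    | base => exact fun _ => rfl
    | succ m hm ih =>
      intro hm1
      rw [← ih (by omega)]
      exact ((endPt_eq_succ_iff m).2 (hno m (by omega) (by omega))).symm
  have hc := hconst n₁ (by omega) le_rfl
  have hjump : endPt pres n₀ < endPt pres (n₀ + 1) := by
    refine lt_of_le_of_ne (endPt_le_succ _) fun h => ?_
    exact (endPt_eq_succ_iff n₀).1 h ⟨i, h0.symm⟩
  have e0 : ((endPt pres n₀ : ℤ) : ZMod pres.N) = pres.kEven i + 1 := by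
    rw [endPt_cast, h0, pres.relation_ends]
  have e1 : ((endPt pres n₁ : ℤ) : ZMod pres.N) = pres.kEven (i + 1) + 1 := by
    rw [endPt_cast, h1, pres.relation_ends]
  -- the lift `m` of `kOdd j` with end point exactly `d` steps beyond that of `n₀`
  set m : ℤ := endPt pres n₀ + d - pres.c (pres.kOdd j) with hm
  have hmc : (m : ZMod pres.N) = pres.kOdd j := by
    rw [hm]
    push_cast
    rw [e0, add_right_comm, hj, pres.relation_ends]
    ring
  have hme : endPt pres m = endPt pres n₀ + d := by
    rw [endPt, hmc, hm]
    ring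
  have hmn : n₀ + 1 ≤ m := by
    by_contra hle
    have := endPt_mono (pres := pres) (show m ≤ n₀ by omega)
    omega
  have hle := endPt_mono (pres := pres) hmn
  obtain ⟨d', hd'⟩ : ∃ d' : ℕ, endPt pres n₁ = endPt pres n₀ + d' :=
    ⟨(endPt pres n₁ - endPt pres n₀).toNat, by omega⟩
  have he : pres.kEven i + d' = pres.kEven (i + 1) := by
    have : ((endPt pres n₁ : ℤ) : ZMod pres.N) = (endPt pres n₀ : ZMod pres.N) + d' := by
      rw [hd']; push_cast; rfl
    rw [e0, e1] at this
    linear_combination -this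
  rcases lt_or_ge d' d with h | h
  · exact absurd ⟨_, he.symm⟩ (hmin d' (by omega) h)
  · rw [← he, show d = d' by omega]

/-! ### The filtration -/

/-- An interval module of length at most `N` with the top and socle of `Δ j` is isomorphic
to `Δ j`. Both lengths lie in `[1, N]` and are congruent modulo `N`, since the socles
agree. -/
lemma IsInterval.equiv_delta {Δ : ZMod pres.r → ModuleCat.{0} Λ}
    (hΔ : ∀ j, IsDelta pres j (Δ j)) (h : IsInterval pres a l M) (hl : l ≤ pres.N)
    (j : ZMod pres.r) (ha : a = pres.kEven (j - 1) + 1) (hs : a + l - 1 = pres.kEven j) :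
    Nonempty (M ≃ₗ[Λ] Δ j) := by
  obtain ⟨hfin, hind, htop, hsoc, hmin⟩ := hΔ j
  have := pres.isArtinianRing
  obtain ⟨n, hn⟩ := ENat.ne_top_iff_exists.1 (Module.length_ne_top (R := Λ) (M := Δ j))
  have hD : IsInterval pres a n (Δ j) :=
    ⟨hfin, pres.nakayama _ hfin hind, hn.symm, exists_surjective_of_topIso (ha ▸ htop)⟩
  have hle : n ≤ l := hmin (ModuleCat.of Λ M) h.fin h.indec (ha ▸ h.topIso) (hs ▸ h.socIso) n l
    (hasLength_of_length_eq hD.length) (hasLength_of_length_eq h.length)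
  have hcast : (n : ZMod pres.N) = l := by
    have := (hD.soc_unique hsoc).trans hs.symm
    linear_combination this
  have hdvd : pres.N ∣ l - n :=
    (Nat.modEq_iff_dvd' hle).1 ((ZMod.natCast_eq_natCast_iff _ _ _).1 hcast)
  have hn1 := hD.one_le
  have : l - n = 0 := Nat.eq_zero_of_dvd_of_lt hdvd (by omega)
  obtain rfl : n = l := by omega
  exact h.equiv hD

/-- The submodules of an interval module with socle in `{kEven j}` and top in
`{kEven j + 1}` are filtered by cutting after every composition factor `kEven j`. -/
lemma IsInterval.exists_filtration {Δ : ZMod pres.r → ModuleCat.{0} Λ}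
    (hΔ : ∀ j, IsDelta pres j (Δ j)) (h : IsInterval pres a l M)
    (hs : a + l - 1 ∈ Set.range pres.kEven) (k : ℕ) :
    a + l - k - 1 ∈ Set.range pres.kEven → ∀ K : Submodule Λ M, Module.length Λ K = k →
    ∃ (n : ℕ) (F : Fin (n + 1) → Submodule Λ M), Monotone F ∧ F 0 = ⊥ ∧ F (Fin.last n) = K ∧
    ∀ i : Fin n, ∃ j : ZMod pres.r,
      Nonempty ((F i.succ ⧸ Submodule.comap (F i.succ).subtype (F i.castSucc)) ≃ₗ[Λ] Δ j) := by
  have := pres.isArtinianRing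
  have := h.fin
  induction k using Nat.strong_induction_on with
  | _ k ih =>
  intro hk K hK
  rcases Nat.eq_zero_or_pos k with rfl | hk0
  · have hb : K = ⊥ := by
      rw [← Submodule.subsingleton_iff_eq_bot, ← Module.length_eq_zero_iff (R := Λ), hK]; rfl
    exact ⟨0, fun _ => ⊥, fun _ _ _ => le_rfl, rfl, hb.symm, fun i => i.elim0⟩
  have hKI := h.sub K hK hk0
  have hkl : k ≤ l := by
    have := Module.length_le_of_injective K.subtype K.subtype_injective
    rw [hK, h.length] at this
    exact_mod_cast this
  classical
  have hex : ∃ d : ℕ, 1 ≤ d ∧ a + l - k - 1 + d ∈ Set.range pres.kEven :=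
    ⟨k, hk0, by convert hs using 1; ring⟩
  -- `d` is the length of the top piece: the distance to the first cut
  obtain ⟨d, ⟨hd1, hdE⟩, hdmin⟩ : ∃ d : ℕ, (1 ≤ d ∧ a + l - k - 1 + d ∈ Set.range pres.kEven) ∧
      ∀ d' : ℕ, 1 ≤ d' → a + l - k - 1 + d' ∈ Set.range pres.kEven → d ≤ d' :=
    ⟨Nat.find hex, Nat.find_spec hex, fun d' h1 h2 => Nat.find_min' hex ⟨h1, h2⟩⟩
  have hdk : d ≤ k := hdmin k hk0 (by convert hs using 1; ring)
  have hdN : d ≤ pres.N :=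
    hdmin pres.N (by have := pres.three_le_N; omega) (by simpa using hk)
  obtain ⟨i, hi⟩ := hk
  obtain ⟨j, hj⟩ := hdE
  have hnext := kEven_next i j d hd1 (by rw [hi, hj])
    (fun d' h1 h2 h3 => absurd (hdmin d' h1 (by rwa [hi] at h3)) (by omega))
  obtain ⟨K', hK'⟩ := h.exists_sub' (k - d) (by omega)
  have hle : K' ≤ K := h.uni.le_of_length (by rw [hK, hK']; exact_mod_cast Nat.sub_le k d)
  obtain ⟨n, F, hF, hF0, hFl, hFq⟩ := ih (k - d) (by omega)
    ⟨j, by rw [hj, Nat.cast_sub hdk]; ring⟩ K' hK'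
  have hQlen : Module.length Λ (K ⧸ Submodule.comap K.subtype K') = d := by
    have h1 := length_eq_sub_add (Submodule.comap K.subtype K')
    rw [(Submodule.comapSubtypeEquivOfLe hle).length_eq, hK, hK'] at h1
    obtain ⟨q, hq⟩ := ENat.ne_top_iff_exists.1
      (Module.length_ne_top (R := Λ) (M := K ⧸ Submodule.comap K.subtype K'))
    rw [← hq] at h1 ⊢
    norm_cast at h1 ⊢
    omega
  have hQ : Nonempty ((K ⧸ Submodule.comap K.subtype K') ≃ₗ[Λ] Δ (i + 1)) := by
    refine (hKI.quot _ (Submodule.mkQ_surjective _) hQlen hd1).equiv_delta hΔ hdN (i + 1) ?_ ?_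
    · rw [add_sub_cancel_right, hi]; ring
    · rw [← hnext, hi]; ring
  have hFle : ∀ i, F i ≤ K := fun i => (hF (Fin.le_last i)).trans (hFl.le.trans hle)
  refine ⟨n + 1, Fin.snoc (α := fun _ => Submodule Λ M) F K, ?_, ?_, by simp, ?_⟩
  · intro x y hxy
    induction y using Fin.lastCases with
    | last =>
      induction x using Fin.lastCases with
      | last => exact le_rfl
      | cast x => simpa using hFle x
    | cast y =>
      induction x using Fin.lastCases with
      | last => exact absurd hxy (not_le.2 (Fin.castSucc_lt_last y))
      | cast x => simpa using hF (Fin.castSucc_le_castSucc_iff.1 hxy)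
  · rw [← Fin.castSucc_zero, Fin.snoc_castSucc, hF0]
  · intro x
    induction x using Fin.lastCases with
    | last =>
      refine ⟨i + 1, ?_⟩
      rw [Fin.succ_last, Fin.snoc_last, Fin.snoc_castSucc, hFl]
      exact hQ
    | cast x =>
      rw [← Fin.castSucc_succ, Fin.snoc_castSucc, Fin.snoc_castSucc]
      exact hFq x

end Intervals

/-- For an indecomposable module `X` over a cyclic Nakayama algebra and any `i ≥ 2`,
the syzygy `Ω^i X` admits a filtration with subquotients among `Δ = {Δ_1, …, Δ_r}`. -/
theorem syzygy_is_delta_module {R Λ : Type} [CommRing R] [Ring Λ] [Algebra R Λ]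
    (pres : CyclicNakayama R Λ)
    (Δ : ZMod pres.r → ModuleCat.{0} Λ) (hΔ : ∀ j, IsDelta pres j (Δ j))
    (X : ModuleCat.{0} Λ) (hfin : Module.Finite Λ X) (hind : Indec Λ X) :
    ∀ i : ℕ, 2 ≤ i → ∀ Y : ModuleCat.{0} Λ, IsNthSyzygy Λ i Y X →
      IsDeltaModule pres Δ Y := by
  intro i hi Y hY
  obtain ⟨n, rfl⟩ := Nat.exists_eq_add_of_le' hi
  rcases nth_syzygy pres n hfin (pres.nakayama X hfin hind) hY with h0 | ⟨a, l, h, ha, hl⟩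
  · exact ⟨0, fun _ => ⊥, fun _ _ _ => le_rfl, rfl, Subsingleton.elim _ _, fun i => i.elim0⟩
  · exact h.exists_filtration hΔ hl l (by simpa using ha) ⊤
      (by rw [Module.length_top, h.length])

end PhiDim
end
end

section
/- Let Λ be a cyclic Nakayama algebra and let X be an Ω-periodic indecomposable Λ-module. Then there exists a projective module P that is the projective cover of some Ω-periodic indecomposable module such that X is isomorphic to a (proper) submodule of P. -/
/-!
If `Ω^k X ≅ X` with `k ≥ 1`, put `Z = Ω^(k-1) X`. Then `X ≅ Ω Z` is the kernel of a projective
cover `P → Z`, and `Z` is itself periodic because `Ω^k Z ≅ Ω^(k-1) X = Z`. The kernel is proper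
since `Z ≠ 0`: a zero module has zero syzygy, while `X ≠ 0`.

It remains to see that `Z` is finitely generated and indecomposable. Over a Nakayama algebra the
class of finitely generated uniserial modules is closed under syzygies: a projective cover of a
finitely generated uniserial module is finitely generated and either zero or indecomposable, hence
uniserial, and both properties pass to submodules since `Λ` is Noetherian. Finally a nonzero
uniserial module is indecomposable.
-/

/-!
Common definitions: Igusa–Todorov φ-function, syzygies, and cyclic Nakayama
algebras presented by monomial relations, following E. Sen,
"The φ-dimension of cyclic Nakayama algebras".
-/

noncomputable section

namespace PhiDim

section Helpers

variable {Λ : Type} [Ring Λ]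

theorem IsUniserial.of_injective {A B : ModuleCat.{0} Λ} (g : A →ₗ[Λ] B)
    (hg : Function.Injective g) (hB : IsUniserial Λ B) : IsUniserial Λ A := by
  intro N₁ N₂
  rcases hB (N₁.map g) (N₂.map g) with h | h
  · exact Or.inl ((Submodule.map_le_map_iff_of_injective hg _ _).1 h)
  · exact Or.inr ((Submodule.map_le_map_iff_of_injective hg _ _).1 h)

theorem IsUniserial.indec {M : ModuleCat.{0} Λ} (hM : IsUniserial Λ M) [hn : Nontrivial M] :
    Indec Λ M := by
  refine ⟨hn, fun N N' h => ?_⟩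
  rcases hM N N' with hle | hle
  · exact Or.inl (h.disjoint.eq_bot_of_le hle)
  · exact Or.inr (h.disjoint.symm.eq_bot_of_le hle)

theorem IsProjCover.eq_top_of_map_eq_top {P M : ModuleCat.{0} Λ} {f : P →ₗ[Λ] M}
    (hf : IsProjCover Λ f) {N : Submodule Λ P} (hN : N.map f = ⊤) : N = ⊤ := by
  apply hf.2.2
  rw [← Submodule.comap_map_eq, hN, Submodule.comap_top]

/-- Lifts of a finite generating set of `M` span `P`, the kernel being superfluous. -/
theorem IsProjCover.finite {P M : ModuleCat.{0} Λ} {f : P →ₗ[Λ] M}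
    (hf : IsProjCover Λ f) (hM : Module.Finite Λ M) : Module.Finite Λ P := by
  obtain ⟨s, hs⟩ := hM.fg_top
  choose g hg using hf.2.1
  refine ⟨Submodule.fg_def.2 ⟨g '' (s : Set M), s.finite_toSet.image g, ?_⟩⟩
  apply hf.eq_top_of_map_eq_top
  rw [Submodule.map_span, Set.image_image]
  simpa [hg] using hs

/-- If `P = N ⊕ N'`, one of the images of `N`, `N'` in the uniserial module `M` contains the
other, hence is all of `M`; the corresponding summand is then all of `P`. -/
theorem IsProjCover.indec {P M : ModuleCat.{0} Λ} {f : P →ₗ[Λ] M}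
    (hf : IsProjCover Λ f) (hM : IsUniserial Λ M) [hn : Nontrivial P] : Indec Λ P := by
  refine ⟨hn, fun N N' h => ?_⟩
  have hsup : N.map f ⊔ N'.map f = ⊤ := by
    rw [← Submodule.map_sup, h.sup_eq_top, Submodule.map_top, LinearMap.range_eq_top.2 hf.2.1]
  rcases hM (N.map f) (N'.map f) with hle | hle
  · have := hf.eq_top_of_map_eq_top (by rwa [sup_eq_right.2 hle] at hsup : N'.map f = ⊤)
    exact Or.inl (h.disjoint.eq_bot_of_le (this ▸ le_top))
  · have := hf.eq_top_of_map_eq_top (by rwa [sup_eq_left.2 hle] at hsup : N.map f = ⊤)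
    exact Or.inr (h.disjoint.symm.eq_bot_of_le (this ▸ le_top))

theorem IsProjCover.nontrivial {P M : ModuleCat.{0} Λ} {f : P →ₗ[Λ] M}
    (hf : IsProjCover Λ f) [Nontrivial P] : Nontrivial M := by
  by_contra h
  rw [not_nontrivial_iff_subsingleton] at h
  exact bot_ne_top (hf.eq_top_of_map_eq_top (N := ⊥) (Subsingleton.elim _ _))

theorem IsSyzygy.finite_uniserial [IsNoetherianRing Λ]
    (nak : ∀ M : ModuleCat.{0} Λ, Module.Finite Λ M → Indec Λ M → IsUniserial Λ M)
    {Y M : ModuleCat.{0} Λ} (h : IsSyzygy Λ Y M) (hM : Module.Finite Λ M ∧ IsUniserial Λ M) :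
    Module.Finite Λ Y ∧ IsUniserial Λ Y := by
  obtain ⟨P, f, hf, ⟨e⟩⟩ := h
  have hPfin : Module.Finite Λ P := hf.finite hM.1
  have hP : IsUniserial Λ P := by
    rcases subsingleton_or_nontrivial P with hs | hn
    · exact fun N₁ N₂ => Or.inl (Subsingleton.elim N₁ N₂).le
    · exact nak P hPfin (hf.indec hM.2)
  have hinj : Function.Injective ((LinearMap.ker f).subtype ∘ₗ e.toLinearMap) :=
    (LinearMap.ker f).injective_subtype.comp e.injective
  exact ⟨Module.Finite.of_injective _ hinj, hP.of_injective _ hinj⟩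

/-- The definition of `IsNthSyzygy` peels off the first syzygy; this peels off the last one. -/
theorem IsNthSyzygy.exists_last {n : ℕ} {Y M : ModuleCat.{0} Λ}
    (h : IsNthSyzygy Λ (n + 1) Y M) : ∃ Z, IsNthSyzygy Λ n Z M ∧ IsSyzygy Λ Y Z := by
  induction n generalizing M with
  | zero =>
    obtain ⟨Z, ⟨P, f, hf, ⟨e⟩⟩, ⟨e'⟩⟩ := h
    exact ⟨M, ⟨LinearEquiv.refl Λ M⟩, P, f, hf, ⟨e'.trans e⟩⟩
  | succ n ih =>
    obtain ⟨Z, hZ, hY⟩ := h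
    obtain ⟨W, hW, hYW⟩ := ih hY
    exact ⟨W, ⟨Z, hZ, hW⟩, hYW⟩

theorem IsNthSyzygy.finite_uniserial [IsNoetherianRing Λ]
    (nak : ∀ M : ModuleCat.{0} Λ, Module.Finite Λ M → Indec Λ M → IsUniserial Λ M)
    {n : ℕ} {Y M : ModuleCat.{0} Λ} (h : IsNthSyzygy Λ n Y M)
    (hM : Module.Finite Λ M ∧ IsUniserial Λ M) : Module.Finite Λ Y ∧ IsUniserial Λ Y := by
  induction n generalizing M with
  | zero =>
    obtain ⟨e⟩ := h
    have := hM.1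
    exact ⟨Module.Finite.equiv e.symm, hM.2.of_injective e.toLinearMap e.injective⟩
  | succ n ih =>
    obtain ⟨Z, hZ, hY⟩ := h
    exact ih hY (hZ.finite_uniserial nak hM)

end Helpers


/-- Over a cyclic Nakayama algebra, every `Ω`-periodic indecomposable module is
isomorphic to a proper submodule of the projective cover of some `Ω`-periodic
indecomposable module. -/
theorem periodic_submodule_of_periodic_projective {R Λ : Type}
    [CommRing R] [Ring Λ] [Algebra R Λ]
    (pres : CyclicNakayama R Λ)
    (X : ModuleCat.{0} Λ) (hfin : Module.Finite Λ X) (hind : Indec Λ X)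
    (hper : IsPeriodic Λ X) :
    ∃ (P M' : ModuleCat.{0} Λ), Module.Finite Λ M' ∧ Indec Λ M' ∧ IsPeriodic Λ M' ∧
      (∃ f : P →ₗ[Λ] M', IsProjCover Λ f) ∧
      ∃ N : Submodule Λ P, N ≠ ⊤ ∧ Nonempty (X ≃ₗ[Λ] N) := by
  have := pres.artinianBase
  have := pres.finiteAlgebra
  have : IsNoetherianRing Λ := IsNoetherianRing.of_finite R Λ
  obtain ⟨k, hk, hX⟩ := hper
  obtain ⟨n, rfl⟩ : ∃ n, k = n + 1 := ⟨k - 1, by omega⟩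
  obtain ⟨Z, hZX, hXZ⟩ := hX.exists_last
  obtain ⟨hZfin, hZuni⟩ :=
    hZX.finite_uniserial pres.nakayama ⟨hfin, pres.nakayama X hfin hind⟩
  obtain ⟨P, f, hf, ⟨e⟩⟩ := id hXZ
  have := hind.1
  have : Nontrivial P :=
    ((LinearMap.ker f).injective_subtype.comp e.injective).nontrivial
  have : Nontrivial Z := hf.nontrivial
  refine ⟨P, Z, hZfin, hZuni.indec, ⟨n + 1, by omega, X, hXZ, hZX⟩, ⟨f, hf⟩,
    LinearMap.ker f, fun h => ?_, ⟨e⟩⟩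
  obtain ⟨z, hz⟩ := exists_ne (0 : Z)
  obtain ⟨p, rfl⟩ := hf.2.1 z
  exact hz (LinearMap.mem_ker.1 (h ▸ Submodule.mem_top))

end PhiDim
end
end
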